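/- arXiv:1405.7542 — 3 statements merged into one kernel-verified Lean document; each statement's English description precedes it below -/
import Mathlib

section
/- The function (x, ρ) ↦ e^{-xᵀKx} · φ_m(ρ) · e^{iρ · P̃(x)^{1/(2m)}} is Lebesgue integrable (absolutely integrable) on ℝ^N × ℝ; indeed its absolute value is bounded by C · exp(−|ρ|^{1+1/(2m)} − xᵀKx) for some constant C > 0. -/
open MeasureTheory Matrix

/-- The Fourier transform `φ_m(ρ) := (1/(2π)) ∫_ℝ e^{-iρr} e^{-r^{2m}} dr`. -/
noncomputable def phiFT (m : ℕ) (ρ : ℝ) : ℂ :=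
  (1 / (2 * Real.pi)) *
    ∫ r : ℝ, Complex.exp (-(Complex.I * (ρ : ℂ) * (r : ℂ))) * (Real.exp (-(r ^ (2 * m))) : ℂ)

/-!
For an entire function `f` with `‖f (r + iy)‖ ≤ e^{C|y|^a} g(r)`, where `g` is integrable and tends
to `0` at infinity, Cauchy's theorem allows shifting the line of integration, so the Fourier
integral `∫ e^{-iρr} f(r) dr` is at most `e^{ρη + C|η|^a} ∫ g` for every real `η`. With `η` of size
`2|ρ|^{1/a}` and sign opposite to that of `ρ`, the exponent is `-2|ρ|^{1 + 1/a} + O(|ρ|)`, and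
Young's inequality absorbs the linear term. The function `e^{-z^{2m}}` satisfies the hypothesis with
`a = 2m`, since `Re (r + iy)^{2m} ≥ r^{2m}/2 - C y^{2m}`. The phase factor has modulus one, so the
integrability claim reduces to that of `e^{-|ρ|^{1 + 1/(2m)}}` and of the Gaussian `e^{-xᵀKx}`,
which the factorisation `K = AᵀA` with `A` invertible turns into a product of Gaussians.
-/

open Filter Topology
open scoped Interval MatrixOrder

section RealPartOfPowers

theorem norm_add_pow_sub_pow_le {R : Type*} [SeminormedRing R] [NormOneClass R] (a b : R) (n : ℕ) :
    ‖(a + b) ^ n - a ^ n‖ ≤ (‖a‖ + ‖b‖) ^ n - ‖a‖ ^ n := by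
  induction n with
  | zero => simp
  | succ n ih =>
    calc ‖(a + b) ^ (n + 1) - a ^ (n + 1)‖
        = ‖((a + b) ^ n - a ^ n) * (a + b) + a ^ n * b‖ := by congr 1; noncomm_ring
      _ ≤ ‖(a + b) ^ n - a ^ n‖ * ‖a + b‖ + ‖a ^ n‖ * ‖b‖ :=
        (norm_add_le _ _).trans (add_le_add (norm_mul_le _ _) (norm_mul_le _ _))
      _ ≤ ((‖a‖ + ‖b‖) ^ n - ‖a‖ ^ n) * (‖a‖ + ‖b‖) + ‖a‖ ^ n * ‖b‖ := by
        gcongr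
        · exact (norm_nonneg _).trans ih
        · exact norm_add_le a b
        · exact norm_pow_le a n
      _ = (‖a‖ + ‖b‖) ^ (n + 1) - ‖a‖ ^ (n + 1) := by ring

theorem exists_add_pow_le_mul_pow_add_mul_pow (n : ℕ) {ε : ℝ} (hε : 0 < ε) :
    ∃ C ≥ 0, ∀ x y : ℝ, 0 ≤ x → 0 ≤ y → (x + y) ^ n ≤ (1 + ε) * x ^ n + C * y ^ n := by
  obtain ⟨δ, hδε, hδ⟩ : ∃ δ : ℝ, (1 + δ) ^ n < 1 + ε ∧ 0 < δ := by
    have hcont : ContinuousAt (fun δ : ℝ => (1 + δ) ^ n) 0 := by fun_prop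
    have hnear : ∀ᶠ δ in 𝓝 (0 : ℝ), (1 + δ) ^ n < 1 + ε :=
      hcont.eventually_lt continuousAt_const (by simpa using hε)
    exact ((hnear.filter_mono nhdsWithin_le_nhds).and (self_mem_nhdsWithin (s := Set.Ioi 0))).exists
  refine ⟨(δ⁻¹ + 1) ^ n, by positivity, fun x y hx hy => ?_⟩
  rcases le_total y (δ * x) with hyx | hxy
  · calc (x + y) ^ n ≤ ((1 + δ) * x) ^ n := by gcongr; linarith
      _ = (1 + δ) ^ n * x ^ n := mul_pow _ _ _
      _ ≤ (1 + ε) * x ^ n := by gcongr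
      _ ≤ (1 + ε) * x ^ n + (δ⁻¹ + 1) ^ n * y ^ n := le_add_of_nonneg_right (by positivity)
  · have hxy' : x ≤ δ⁻¹ * y := (le_inv_mul_iff₀ hδ).2 hxy
    calc (x + y) ^ n ≤ ((δ⁻¹ + 1) * y) ^ n := by gcongr; linarith
      _ = (δ⁻¹ + 1) ^ n * y ^ n := mul_pow _ _ _
      _ ≤ (1 + ε) * x ^ n + (δ⁻¹ + 1) ^ n * y ^ n := le_add_of_nonneg_left (by positivity)

theorem exists_mul_abs_pow_sub_le_re_pow {n : ℕ} (hn : Even n) {ε : ℝ} (hε : 0 < ε) :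
    ∃ C ≥ 0, ∀ r y : ℝ,
      (1 - ε) * |r| ^ n - C * |y| ^ n ≤ (((r : ℂ) + y * Complex.I) ^ n).re := by
  obtain ⟨C, hC, hadd⟩ := exists_add_pow_le_mul_pow_add_mul_pow n hε
  refine ⟨C, hC, fun r y => ?_⟩
  have hre : ((r : ℂ) ^ n).re = |r| ^ n := by
    rw [← Complex.ofReal_pow, Complex.ofReal_re, hn.pow_abs]
  have hdiff : |(((r : ℂ) + y * Complex.I) ^ n).re - |r| ^ n| ≤ (|r| + |y|) ^ n - |r| ^ n := by
    rw [← hre, ← Complex.sub_re, hre]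
    refine (Complex.abs_re_le_norm _).trans ?_
    simpa using norm_add_pow_sub_pow_le (r : ℂ) (y * Complex.I) n
  linarith [(abs_le.1 hdiff).1, hadd |r| |y| (abs_nonneg r) (abs_nonneg y)]

theorem exists_norm_cexp_neg_pow_le {n : ℕ} (hn : Even n) :
    ∃ C ≥ 0, ∀ r y : ℝ, ‖Complex.exp (-((r : ℂ) + y * Complex.I) ^ n)‖ ≤
      Real.exp (C * |y| ^ (n : ℝ)) * Real.exp (-(1 / 2) * |r| ^ (n : ℝ)) := by
  obtain ⟨C, hC, hre⟩ := exists_mul_abs_pow_sub_le_re_pow hn (one_half_pos (α := ℝ))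
  refine ⟨C, hC, fun r y => ?_⟩
  rw [Complex.norm_exp, Complex.neg_re, ← Real.exp_add, Real.exp_le_exp, Real.rpow_natCast,
    Real.rpow_natCast]
  linarith [hre r y]

end RealPartOfPowers

section ContourShift

variable {E : Type*} [NormedAddCommGroup E] [NormedSpace ℂ E] {F : ℂ → E} {g : ℝ → ℝ} {a b : ℝ}

theorem tendsto_intervalIntegral_add_mul_I_cocompact (hg₀ : Tendsto g (cocompact ℝ) (𝓝 0))
    (hFg : ∀ r : ℝ, ∀ y ∈ [[a, b]], ‖F (r + y * Complex.I)‖ ≤ g r) :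
    Tendsto (fun T : ℝ => ∫ y in a..b, F (T + y * Complex.I)) (cocompact ℝ) (𝓝 0) := by
  refine squeeze_zero_norm (a := fun T => g T * |b - a|) (fun T => ?_) ?_
  · exact intervalIntegral.norm_integral_le_of_norm_le_const fun y hy =>
      hFg T y (Set.uIoc_subset_uIcc hy)
  · simpa using hg₀.mul_const |b - a|

theorem integrable_comp_add_mul_I (hF : DifferentiableOn ℂ F (Complex.im ⁻¹' [[a, b]]))
    (hg : Integrable g) (hFg : ∀ r : ℝ, ∀ y ∈ [[a, b]], ‖F (r + y * Complex.I)‖ ≤ g r)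
    {y : ℝ} (hy : y ∈ [[a, b]]) : Integrable fun r : ℝ => F (r + y * Complex.I) := by
  have hcont : Continuous fun r : ℝ => F (r + y * Complex.I) :=
    hF.continuousOn.comp_continuous (by fun_prop) fun r => by simpa using hy
  exact hg.mono' hcont.aestronglyMeasurable (.of_forall fun r => hFg r y hy)

theorem integral_comp_add_mul_I_eq [CompleteSpace E]
    (hF : DifferentiableOn ℂ F (Complex.im ⁻¹' [[a, b]])) (hg : Integrable g)
    (hg₀ : Tendsto g (cocompact ℝ) (𝓝 0))
    (hFg : ∀ r : ℝ, ∀ y ∈ [[a, b]], ‖F (r + y * Complex.I)‖ ≤ g r) :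
    ∫ r : ℝ, F (r + a * Complex.I) = ∫ r : ℝ, F (r + b * Complex.I) := by
  have hrect (T : ℝ) : (∫ r in (-T)..T, F (r + a * Complex.I))
      - (∫ r in (-T)..T, F (r + b * Complex.I))
      + Complex.I • (∫ y in a..b, F (T + y * Complex.I))
      - Complex.I • (∫ y in a..b, F ((-T : ℝ) + y * Complex.I)) = 0 := by
    have hsub : [[-T, T]] ×ℂ [[a, b]] ⊆ Complex.im ⁻¹' [[a, b]] := Set.inter_subset_right
    simpa using Complex.integral_boundary_rect_eq_zero_of_differentiableOn F
      (-T + a * Complex.I) (T + b * Complex.I) (hF.mono (by simpa using hsub))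
  have hhor {y : ℝ} (hy : y ∈ [[a, b]]) :
      Tendsto (fun T : ℝ => ∫ r in (-T)..T, F (r + y * Complex.I)) atTop
        (𝓝 (∫ r : ℝ, F (r + y * Complex.I))) :=
    intervalIntegral_tendsto_integral (integrable_comp_add_mul_I hF hg hFg hy)
      tendsto_neg_atTop_atBot tendsto_id
  have hvert := tendsto_intervalIntegral_add_mul_I_cocompact hg₀ hFg
  have hright := (hvert.mono_left atTop_le_cocompact).const_smul Complex.I
  have hleft := ((hvert.mono_left atBot_le_cocompact).comp tendsto_neg_atTop_atBot).const_smul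
    Complex.I
  have hlim := (((hhor Set.left_mem_uIcc).sub (hhor Set.right_mem_uIcc)).add hright).sub hleft
  have := tendsto_nhds_unique hlim (tendsto_const_nhds.congr fun T => (hrect T).symm)
  simpa [sub_eq_zero] using this

end ContourShift

section FourierDecay

variable {f : ℂ → ℂ} {g : ℝ → ℝ}

theorem norm_integral_cexp_mul_le (hf : Differentiable ℂ f) (hg : Integrable g)
    (hg₀ : Tendsto g (cocompact ℝ) (𝓝 0)) {w : ℝ → ℝ} (hw : Continuous w)
    (hfg : ∀ r y : ℝ, ‖f (r + y * Complex.I)‖ ≤ w y * g r) (ρ η : ℝ) :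
    ‖∫ r : ℝ, Complex.exp (-(Complex.I * ρ * r)) * f r‖ ≤
      Real.exp (ρ * η) * w η * ∫ r, g r := by
  set F : ℂ → ℂ := fun z => Complex.exp (-(Complex.I * ρ * z)) * f z with hF
  have hFle (r y : ℝ) : ‖F (r + y * Complex.I)‖ ≤ Real.exp (ρ * y) * w y * g r := by
    have hexp : ‖Complex.exp (-(Complex.I * ρ * (r + y * Complex.I)))‖ = Real.exp (ρ * y) := by
      simp [Complex.norm_exp]
    rw [hF, norm_mul, hexp, mul_assoc]
    gcongr
    exact hfg r y
  obtain ⟨B, hB⟩ := (isCompact_uIcc (a := 0) (b := η)).exists_bound_of_continuousOn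
    (f := fun y => Real.exp (ρ * y) * w y) (by fun_prop)
  have hFstrip (r y : ℝ) (hy : y ∈ [[0, η]]) : ‖F (r + y * Complex.I)‖ ≤ B * |g r| :=
    calc ‖F (r + y * Complex.I)‖ ≤ |Real.exp (ρ * y) * w y * g r| :=
          (hFle r y).trans (le_abs_self _)
      _ = |Real.exp (ρ * y) * w y| * |g r| := abs_mul _ _
      _ ≤ B * |g r| := by gcongr; exact hB y hy
  have hshift : ∫ r : ℝ, F r = ∫ r : ℝ, F (r + η * Complex.I) := by
    simpa using integral_comp_add_mul_I_eq (a := 0) (b := η)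
      (by fun_prop : Differentiable ℂ F).differentiableOn (hg.abs.const_mul B)
      (by simpa using hg₀.abs.const_mul B) hFstrip
  rw [hshift, ← integral_const_mul]
  exact norm_integral_le_of_norm_le (hg.const_mul _) (.of_forall fun r => hFle r η)

theorem exists_mul_le_rpow_add {p : ℝ} (hp : 1 < p) (c : ℝ) :
    ∃ D, ∀ t, 0 ≤ t → c * t ≤ t ^ p + D := by
  refine ⟨|c| ^ p.conjExponent / p.conjExponent, fun t ht => ?_⟩
  calc c * t = t * c := mul_comm c t
    _ ≤ |t| ^ p / p + |c| ^ p.conjExponent / p.conjExponent :=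
      Real.young_inequality t c (.conjExponent hp)
    _ ≤ t ^ p + |c| ^ p.conjExponent / p.conjExponent := by
      rw [abs_of_nonneg ht]
      gcongr
      exact div_le_self (by positivity) hp.le

theorem exists_add_mul_abs_rpow_le {a C : ℝ} (ha : 0 < a) (hC : 0 ≤ C) :
    ∃ D, ∀ ρ : ℝ, ∃ η : ℝ, ρ * η + C * |η| ^ a ≤ D - |ρ| ^ (1 + 1 / a) := by
  obtain ⟨D, hD⟩ := exists_mul_le_rpow_add (p := 1 + 1 / a) (by simpa using ha) (C * 2 ^ a)
  refine ⟨D, fun ρ => ⟨-(SignType.sign ρ * (2 * |ρ| ^ (1 / a))), ?_⟩⟩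
  have hlin : ρ * -(SignType.sign ρ * (2 * |ρ| ^ (1 / a))) = -(2 * |ρ| ^ (1 + 1 / a)) := by
    rw [Real.rpow_one_add' (abs_nonneg ρ) (by positivity)]
    linear_combination (-2 * |ρ| ^ (1 / a)) * self_mul_sign ρ
  have hpow : |-(SignType.sign ρ * (2 * |ρ| ^ (1 / a)))| ^ a ≤ 2 ^ a * |ρ| := by
    have hsign : |(SignType.sign ρ : ℝ)| ≤ 1 := by
      rcases lt_trichotomy ρ 0 with h | rfl | h <;> simp [*]
    calc |-(SignType.sign ρ * (2 * |ρ| ^ (1 / a)))| ^ a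
        = (|(SignType.sign ρ : ℝ)| * (2 * |ρ| ^ (1 / a))) ^ a := by
          rw [abs_neg, abs_mul, abs_of_nonneg (a := 2 * _) (by positivity)]
      _ ≤ (2 * |ρ| ^ (1 / a)) ^ a := by
          exact Real.rpow_le_rpow (by positivity)
            (mul_le_of_le_one_left (by positivity) hsign) ha.le
      _ = 2 ^ a * |ρ| := by
          rw [Real.mul_rpow zero_le_two (by positivity), one_div,
            Real.rpow_inv_rpow (abs_nonneg ρ) ha.ne']
  linarith [mul_le_mul_of_nonneg_left hpow hC, hD |ρ| (abs_nonneg ρ)]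

theorem exists_norm_integral_cexp_mul_le_exp_neg_rpow (hf : Differentiable ℂ f)
    (hg : Integrable g) (hg₀ : Tendsto g (cocompact ℝ) (𝓝 0)) {a C : ℝ} (ha : 0 < a) (hC : 0 ≤ C)
    (hfg : ∀ r y : ℝ, ‖f (r + y * Complex.I)‖ ≤ Real.exp (C * |y| ^ a) * g r) :
    ∃ B, ∀ ρ : ℝ, ‖∫ r : ℝ, Complex.exp (-(Complex.I * ρ * r)) * f r‖ ≤
      B * Real.exp (-|ρ| ^ (1 + 1 / a)) := by
  obtain ⟨D, hD⟩ := exists_add_mul_abs_rpow_le ha hC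
  have hw : Continuous fun y : ℝ => Real.exp (C * |y| ^ a) := by fun_prop (disch := positivity)
  have hg_nonneg : 0 ≤ ∫ r, g r := integral_nonneg fun r =>
    nonneg_of_mul_nonneg_right ((norm_nonneg _).trans (hfg r 0)) (Real.exp_pos _)
  refine ⟨Real.exp D * ∫ r, g r, fun ρ => ?_⟩
  obtain ⟨η, hη⟩ := hD ρ
  calc ‖∫ r : ℝ, Complex.exp (-(Complex.I * ρ * r)) * f r‖
      ≤ Real.exp (ρ * η) * Real.exp (C * |η| ^ a) * ∫ r, g r :=
        norm_integral_cexp_mul_le hf hg hg₀ hw hfg ρ η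
    _ = Real.exp (ρ * η + C * |η| ^ a) * ∫ r, g r := by rw [Real.exp_add]
    _ ≤ Real.exp (D - |ρ| ^ (1 + 1 / a)) * ∫ r, g r := by gcongr
    _ = Real.exp D * (∫ r, g r) * Real.exp (-|ρ| ^ (1 + 1 / a)) := by
        rw [sub_eq_add_neg, Real.exp_add, mul_right_comm]

end FourierDecay

section ExponentialIntegrals

theorem integrable_exp_neg_mul_norm_rpow {E : Type*} [NormedAddCommGroup E] [NormedSpace ℝ E]
    [FiniteDimensional ℝ E] [Nontrivial E] [MeasurableSpace E] [BorelSpace E] (μ : Measure E)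
    [μ.IsAddHaarMeasure] {b p : ℝ} (hb : 0 < b) (hp : 0 < p) :
    Integrable (fun x => Real.exp (-b * ‖x‖ ^ p)) μ := by
  refine (integrable_fun_norm_addHaar μ (f := fun t => Real.exp (-b * t ^ p))).2 ?_
  simpa only [Real.rpow_natCast, smul_eq_mul] using integrableOn_rpow_mul_exp_neg_mul_rpow
    (neg_one_lt_zero.trans_le (Nat.cast_nonneg (Module.finrank ℝ E - 1))) hp hb

theorem tendsto_exp_neg_mul_norm_rpow_cocompact {E : Type*} [SeminormedAddCommGroup E]
    [ProperSpace E] {b p : ℝ} (hb : 0 < b) (hp : 0 < p) :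
    Tendsto (fun x : E => Real.exp (-b * ‖x‖ ^ p)) (cocompact E) (𝓝 0) :=
  Real.tendsto_exp_atBot.comp <| ((tendsto_rpow_atTop hp).comp
    tendsto_norm_cocompact_atTop).const_mul_atTop_of_neg (neg_neg_of_pos hb)

theorem integrable_exp_neg_dotProduct_self (ι : Type*) [Fintype ι] :
    Integrable fun x : ι → ℝ => Real.exp (-(x ⬝ᵥ x)) := by
  have hprod := Integrable.fintype_prod (ι := ι) (f := fun _ (t : ℝ) => Real.exp (-1 * t ^ 2))
    fun _ => integrable_exp_neg_mul_sq one_pos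
  simpa [dotProduct, ← Real.exp_sum, ← sq, volume_pi] using hprod

theorem integrable_comp_mulVec {ι E : Type*} [Fintype ι] [DecidableEq ι] [NormedAddCommGroup E]
    {f : (ι → ℝ) → E} (hf : Integrable f) {A : Matrix ι ι ℝ} (hA : A.det ≠ 0) :
    Integrable fun x => f (A *ᵥ x) := by
  have hmap : Integrable f (Measure.map (toLin' A) volume) := by
    rw [Real.map_matrix_volume_pi_eq_smul_volume_pi hA]
    exact hf.smul_measure ENNReal.ofReal_ne_top
  exact hmap.comp_measurable (toLin' A).continuous_of_finiteDimensional.measurable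

theorem integrable_exp_neg_quadraticForm {ι : Type*} [Fintype ι] {K : Matrix ι ι ℝ}
    (hK : K.PosDef) : Integrable fun x : ι → ℝ => Real.exp (-(x ⬝ᵥ K *ᵥ x)) := by
  classical
  obtain ⟨A, hA, rfl⟩ :=
    CStarAlgebra.isStrictlyPositive_iff_eq_star_mul_self.1 hK.isStrictlyPositive
  have hquad (x : ι → ℝ) : x ⬝ᵥ (star A * A) *ᵥ x = A *ᵥ x ⬝ᵥ A *ᵥ x := by
    rw [← mulVec_mulVec, dotProduct_mulVec, star_eq_conjTranspose,
      conjTranspose_eq_transpose_of_trivial, vecMul_transpose]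
  simpa only [hquad] using integrable_comp_mulVec (integrable_exp_neg_dotProduct_self ι)
    ((isUnit_iff_isUnit_det A).1 hA).ne_zero

theorem integrable_exp_neg_abs_rpow_sub_quadraticForm {ι : Type*} [Fintype ι] {K : Matrix ι ι ℝ}
    (hK : K.PosDef) {p : ℝ} (hp : 0 < p) :
    Integrable fun xρ : (ι → ℝ) × ℝ => Real.exp (-(|xρ.2| ^ p) - xρ.1 ⬝ᵥ K *ᵥ xρ.1) := by
  refine ((integrable_exp_neg_quadraticForm hK).mul_prod
    (integrable_exp_neg_mul_norm_rpow (E := ℝ) volume one_pos hp)).congr (.of_forall fun xρ => ?_)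
  simp only [← Real.exp_add, Real.norm_eq_abs]
  ring_nf

end ExponentialIntegrals

theorem stronglyMeasurable_phiFT (m : ℕ) : StronglyMeasurable (phiFT m) := by
  have hcont : Continuous fun z : ℝ × ℝ =>
      Complex.exp (-(Complex.I * (z.1 : ℂ) * (z.2 : ℂ))) * (Real.exp (-(z.2 ^ (2 * m))) : ℂ) := by
    fun_prop
  exact hcont.stronglyMeasurable.integral_prod_right'.const_mul _

theorem exists_norm_phiFT_le {m : ℕ} (hm : 0 < m) :
    ∃ C > 0, ∀ ρ, ‖phiFT m ρ‖ ≤ C * Real.exp (-|ρ| ^ (1 + 1 / (2 * (m : ℝ)))) := by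
  have hm' : (0 : ℝ) < (2 * m : ℕ) := by exact_mod_cast Nat.mul_pos two_pos hm
  obtain ⟨C, hC, hexp⟩ := exists_norm_cexp_neg_pow_le (even_two_mul m)
  obtain ⟨B, hB⟩ := exists_norm_integral_cexp_mul_le_exp_neg_rpow
    (f := fun z => Complex.exp (-z ^ (2 * m))) (by fun_prop)
    (integrable_exp_neg_mul_norm_rpow volume one_half_pos hm')
    (tendsto_exp_neg_mul_norm_rpow_cocompact one_half_pos hm') hm' hC hexp
  refine ⟨max 1 (‖(1 / (2 * Real.pi) : ℂ)‖ * B), by positivity, fun ρ => ?_⟩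
  calc ‖phiFT m ρ‖
      = ‖(1 / (2 * Real.pi) : ℂ)‖ *
          ‖∫ r : ℝ, Complex.exp (-(Complex.I * ρ * r)) * Complex.exp (-(r : ℂ) ^ (2 * m))‖ := by
        simp [phiFT]
    _ ≤ ‖(1 / (2 * Real.pi) : ℂ)‖ * (B * Real.exp (-|ρ| ^ (1 + 1 / (2 * (m : ℝ))))) := by
        gcongr
        simpa using hB ρ
    _ ≤ max 1 (‖(1 / (2 * Real.pi) : ℂ)‖ * B) * Real.exp (-|ρ| ^ (1 + 1 / (2 * (m : ℝ)))) := by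
        rw [← mul_assoc]
        gcongr
        exact le_max_right _ _

theorem norm_cexp_neg_mul_mul_cexp_I_mul (k ρ q : ℝ) (z : ℂ) :
    ‖Complex.exp (-(k : ℂ)) * z * Complex.exp (Complex.I * ρ * q)‖ = ‖z‖ * Real.exp (-k) := by
  simp [Complex.norm_exp, mul_comm]

theorem stmt3_general {ι : Type*} [Fintype ι] {m : ℕ} (hm : 0 < m) {q : (ι → ℝ) → ℝ}
    (hq : AEMeasurable q) {K : Matrix ι ι ℝ} (hK : K.PosDef) :
    Integrable (fun xρ : (ι → ℝ) × ℝ =>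
        Complex.exp (-((xρ.1 ⬝ᵥ K *ᵥ xρ.1 : ℝ) : ℂ)) * phiFT m xρ.2 *
          Complex.exp (Complex.I * (xρ.2 : ℂ) * (q xρ.1 : ℂ))) ∧
      ∃ C > 0, ∀ (x : ι → ℝ) (ρ : ℝ),
        ‖Complex.exp (-((x ⬝ᵥ K *ᵥ x : ℝ) : ℂ)) * phiFT m ρ *
            Complex.exp (Complex.I * (ρ : ℂ) * (q x : ℂ))‖ ≤
          C * Real.exp (-(|ρ| ^ (1 + 1 / (2 * (m : ℝ)))) - x ⬝ᵥ K *ᵥ x) := by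
  obtain ⟨C, hC, hphi⟩ := exists_norm_phiFT_le hm
  have hbound (x : ι → ℝ) (ρ : ℝ) :
      ‖Complex.exp (-((x ⬝ᵥ K *ᵥ x : ℝ) : ℂ)) * phiFT m ρ *
          Complex.exp (Complex.I * (ρ : ℂ) * (q x : ℂ))‖ ≤
        C * Real.exp (-(|ρ| ^ (1 + 1 / (2 * (m : ℝ)))) - x ⬝ᵥ K *ᵥ x) := by
    rw [norm_cexp_neg_mul_mul_cexp_I_mul, sub_eq_add_neg, Real.exp_add, ← mul_assoc]
    gcongr
    exact hphi ρ
  have hdom := (integrable_exp_neg_abs_rpow_sub_quadraticForm hK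
    (by positivity : (0 : ℝ) < 1 + 1 / (2 * (m : ℝ)))).const_mul C
  have hgauss_meas : Measurable fun xρ : (ι → ℝ) × ℝ =>
      Complex.exp (-((xρ.1 ⬝ᵥ K *ᵥ xρ.1 : ℝ) : ℂ)) := Continuous.measurable (by fun_prop)
  have hphi_meas : Measurable fun xρ : (ι → ℝ) × ℝ => phiFT m xρ.2 :=
    (stronglyMeasurable_phiFT m).measurable.comp measurable_snd
  have hphase_meas : AEMeasurable fun xρ : (ι → ℝ) × ℝ =>
      Complex.exp (Complex.I * (xρ.2 : ℂ) * (q xρ.1 : ℂ)) :=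
    Complex.measurable_exp.comp_aemeasurable
      (.mul (by fun_prop) (Complex.measurable_ofReal.comp_aemeasurable hq.comp_fst))
  exact ⟨hdom.mono' ((hgauss_meas.mul hphi_meas).aemeasurable.mul hphase_meas).aestronglyMeasurable
    (.of_forall fun xρ => hbound xρ.1 xρ.2), C, hC, hbound⟩

theorem stmt3 (N m : ℕ) (hN : 0 < N) (hm : 0 < m)
    (p : MvPolynomial (Fin N) ℝ) (hdeg : p.totalDegree = 2 * m)
    (M : ℝ) (hM : 0 ≤ M) (hPbound : ∀ x : Fin N → ℝ, -M ≤ MvPolynomial.eval x p)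
    (K : Matrix (Fin N) (Fin N) ℝ) (hK : K.PosDef) :
    Integrable (fun xρ : (Fin N → ℝ) × ℝ =>
        Complex.exp (-((xρ.1 ⬝ᵥ K *ᵥ xρ.1 : ℝ) : ℂ)) * phiFT m xρ.2 *
          Complex.exp (Complex.I * (xρ.2 : ℂ) *
            (((MvPolynomial.eval xρ.1 p + M) ^ ((1 : ℝ) / (2 * m)) : ℝ) : ℂ))) ∧
      ∃ C > 0, ∀ (x : Fin N → ℝ) (ρ : ℝ),
        ‖Complex.exp (-((x ⬝ᵥ K *ᵥ x : ℝ) : ℂ)) * phiFT m ρ *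
            Complex.exp (Complex.I * (ρ : ℂ) *
              (((MvPolynomial.eval x p + M) ^ ((1 : ℝ) / (2 * m)) : ℝ) : ℂ))‖ ≤
          C * Real.exp (-(|ρ| ^ (1 + 1 / (2 * (m : ℝ)))) - x ⬝ᵥ K *ᵥ x) :=
  stmt3_general hm ((MvPolynomial.continuous_eval p).add continuous_const
    |>.measurable.pow_const _).aemeasurable hK
end

section
/- For every R > 0, define J(R) := e^{M} ∫_{-R}^{R} φ_m(ρ) ( ∫_{ℝ^N} e^{-xᵀKx} e^{iρ · P̃(x)^{1/(2m)}} dx ) dρ and A_n(m, R) := i^n ∫_{-R}^{R} φ_m(ρ) ρ^n dρ. Then J(R) = e^{M} ∑_{n=0}^∞ (A_n(m, R)/n!) ∫_{ℝ^N} P̃(x)^{n/(2m)} e^{-xᵀKx} dx, and this series converges absolutely. -/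
/-!
Write `g = (P + M) ^ (1 / (2m))` and expand `e ^ (iρg)` in its exponential series inside the double
integral. On `[-R, R] × ℝ^N` the norms of the terms sum to at most
`|φ_m(ρ)| * e ^ (R g(x)) * e ^ (-xᵀKx)`, so dominated convergence on the product space, followed by
Fubini in each term, gives the claim once this bound is integrable. It is: `φ_m` is continuous, and
`g` grows at most like `|x| ^ (deg P / (2m))`, which is slower than the quadratic form as soon as
`deg P < 4m`.
-/

open MeasureTheory Matrix

/-- The coefficient `A_n(m, R) := iⁿ ∫_{-R}^{R} φ_m(ρ) ρⁿ dρ`. -/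
noncomputable def coeffA (m : ℕ) (R : ℝ) (n : ℕ) : ℂ :=
  Complex.I ^ n * ∫ ρ in (-R)..R, phiFT m ρ * (ρ : ℂ) ^ n

section TermwiseIntegration

variable {α β : Type*} [MeasurableSpace α] [MeasurableSpace β] {ν : Measure α} {μ : Measure β}
  {φ f : α → ℂ} {w g : β → ℂ} {R : ℝ}

theorem integrable_prod_mul_mul_cexp (hφ : Integrable φ ν) (hf : AEStronglyMeasurable f ν)
    (hfR : ∀ᵐ a ∂ν, ‖f a‖ ≤ R) (hw : AEStronglyMeasurable w μ) (hg : AEStronglyMeasurable g μ)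
    (hgw : Integrable (fun b => Real.exp (R * ‖g b‖) * ‖w b‖) μ) :
    Integrable (fun z : α × β => φ z.1 * (w z.2 * Complex.exp (f z.1 * g z.2))) (ν.prod μ) := by
  refine (hφ.norm.mul_prod hgw).mono' (hφ.aestronglyMeasurable.comp_fst.mul (hw.comp_snd.mul
    (Complex.continuous_exp.comp_aestronglyMeasurable (hf.comp_fst.mul hg.comp_snd)))) ?_
  filter_upwards [Measure.quasiMeasurePreserving_fst.ae hfR] with z hz
  have hexp : ‖Complex.exp (f z.1 * g z.2)‖ ≤ Real.exp (R * ‖g z.2‖) := by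
    refine (Complex.norm_exp_le_exp_norm _).trans (Real.exp_le_exp.2 ?_)
    rw [norm_mul]
    gcongr
  rw [norm_mul, norm_mul, mul_comm ‖w z.2‖]
  gcongr

theorem hasSum_integral_prod_mul_mul_cexp
    (hφ : Integrable φ ν) (hf : AEStronglyMeasurable f ν) (hfR : ∀ᵐ a ∂ν, ‖f a‖ ≤ R)
    (hw : AEStronglyMeasurable w μ) (hg : AEStronglyMeasurable g μ)
    (hgw : Integrable (fun b => Real.exp (R * ‖g b‖) * ‖w b‖) μ) :
    HasSum (fun n : ℕ => ∫ z : α × β,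
        φ z.1 * f z.1 ^ n / (n.factorial : ℂ) * (g z.2 ^ n * w z.2) ∂ν.prod μ)
      (∫ z : α × β, φ z.1 * (w z.2 * Complex.exp (f z.1 * g z.2)) ∂ν.prod μ) := by
  have hexp (z : α × β) : HasSum
      (fun n : ℕ => ‖φ z.1‖ * ((R * ‖g z.2‖) ^ n / n.factorial * ‖w z.2‖))
      (‖φ z.1‖ * (Real.exp (R * ‖g z.2‖) * ‖w z.2‖)) := by
    rw [Real.exp_eq_exp_ℝ]
    exact ((NormedSpace.expSeries_div_hasSum_exp (R * ‖g z.2‖)).mul_right _).mul_left _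
  refine hasSum_integral_of_dominated_convergence
    (fun n z => ‖φ z.1‖ * ((R * ‖g z.2‖) ^ n / n.factorial * ‖w z.2‖))
    (fun n => ?_) (fun n => ?_) (ae_of_all _ fun z => (hexp z).summable) ?_
    (ae_of_all _ fun z => ?_)
  · simp_rw [div_eq_mul_inv]
    exact ((hφ.aestronglyMeasurable.mul (hf.pow n)).mul_const _).comp_fst.mul
      ((hg.pow n).mul hw).comp_snd
  · filter_upwards [Measure.quasiMeasurePreserving_fst.ae hfR] with z hz
    calc ‖φ z.1 * f z.1 ^ n / (n.factorial : ℂ) * (g z.2 ^ n * w z.2)‖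
        = ‖φ z.1‖ * ((‖f z.1‖ * ‖g z.2‖) ^ n / n.factorial * ‖w z.2‖) := by
          simp only [norm_div, norm_mul, norm_pow, Complex.norm_natCast]
          ring
      _ ≤ ‖φ z.1‖ * ((R * ‖g z.2‖) ^ n / n.factorial * ‖w z.2‖) := by gcongr
  · exact (hφ.norm.mul_prod hgw).congr (ae_of_all _ fun z => (hexp z).tsum_eq.symm)
  · have hseries := NormedSpace.expSeries_div_hasSum_exp (f z.1 * g z.2)
    rw [← Complex.exp_eq_exp_ℂ] at hseries
    refine ((hseries.mul_left (w z.2)).mul_left (φ z.1)).congr_fun fun n => ?_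
    ring

theorem hasSum_integral_mul_integral_mul_cexp [SFinite ν] [SFinite μ]
    (hφ : Integrable φ ν) (hf : AEStronglyMeasurable f ν) (hfR : ∀ᵐ a ∂ν, ‖f a‖ ≤ R)
    (hw : AEStronglyMeasurable w μ) (hg : AEStronglyMeasurable g μ)
    (hgw : Integrable (fun b => Real.exp (R * ‖g b‖) * ‖w b‖) μ) :
    HasSum (fun n : ℕ => (∫ a, φ a * f a ^ n ∂ν) / (n.factorial : ℂ) * ∫ b, g b ^ n * w b ∂μ)
      (∫ a, φ a * ∫ b, w b * Complex.exp (f a * g b) ∂μ ∂ν) := by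
  have hswap : ∫ a, φ a * ∫ b, w b * Complex.exp (f a * g b) ∂μ ∂ν =
      ∫ z : α × β, φ z.1 * (w z.2 * Complex.exp (f z.1 * g z.2)) ∂ν.prod μ := by
    rw [integral_prod _ (integrable_prod_mul_mul_cexp hφ hf hfR hw hg hgw)]
    simp only [integral_const_mul]
  rw [hswap]
  refine (hasSum_integral_prod_mul_mul_cexp hφ hf hfR hw hg hgw).congr_fun fun n => ?_
  rw [← integral_div, ← integral_prod_mul]

theorem hasSum_intervalIntegral_mul_integral_mul_cexp [SFinite μ] {φ : ℝ → ℂ} {a b : ℝ}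
    (hφ : IntervalIntegrable φ volume a b)
    (hw : AEStronglyMeasurable w μ) (hg : AEStronglyMeasurable g μ)
    (hgw : Integrable (fun y => Real.exp (max |a| |b| * ‖g y‖) * ‖w y‖) μ) :
    HasSum (fun n : ℕ =>
        (∫ ρ in a..b, φ ρ * (Complex.I * ρ) ^ n) / (n.factorial : ℂ) * ∫ y, g y ^ n * w y ∂μ)
      (∫ ρ in a..b, φ ρ * ∫ y, w y * Complex.exp (Complex.I * ρ * g y) ∂μ) := by
  have hbound : ∀ᵐ ρ : ℝ ∂volume.restrict (Set.uIoc a b), ‖Complex.I * ρ‖ ≤ max |a| |b| := by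
    refine ae_restrict_of_forall_mem measurableSet_uIoc fun ρ hρ => ?_
    rw [norm_mul, Complex.norm_I, one_mul, Complex.norm_real, Real.norm_eq_abs]
    rcases Set.mem_uIcc.1 (Set.uIoc_subset_uIcc hρ) with ⟨haρ, hρb⟩ | ⟨hbρ, hρa⟩
    · exact abs_le_max_abs_abs haρ hρb
    · exact max_comm |a| |b| ▸ abs_le_max_abs_abs hbρ hρa
  simp only [intervalIntegral.intervalIntegral_eq_integral_uIoc, smul_div_assoc, smul_mul_assoc]
  exact (hasSum_integral_mul_integral_mul_cexp (intervalIntegrable_iff.1 hφ)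
    (Continuous.aestronglyMeasurable (by fun_prop)) hbound hw hg hgw).const_smul _

end TermwiseIntegration

theorem exists_forall_mul_rpow_le_mul_add {q : ℝ} (hq0 : 0 ≤ q) (hq1 : q < 1) (a : ℝ)
    {ε : ℝ} (hε : 0 < ε) : ∃ C : ℝ, ∀ t : ℝ, 0 ≤ t → a * t ^ q ≤ ε * t + C := by
  obtain ⟨T, hT⟩ := ((Filter.eventually_gt_atTop 0).and
    ((tendsto_rpow_atTop (sub_pos.2 hq1)).eventually_ge_atTop (|a| / ε))).exists_forall_of_atTop
  refine ⟨|a| * T ^ q, fun t ht => ?_⟩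
  have hT0 : 0 < T := (hT T le_rfl).1
  have ha : a * t ^ q ≤ |a| * t ^ q := by gcongr; exact le_abs_self a
  rcases le_total t T with htT | hTt
  · have : |a| * t ^ q ≤ |a| * T ^ q := by gcongr
    have : 0 ≤ ε * t := by positivity
    linarith
  · obtain ⟨ht0, hlarge⟩ := hT t hTt
    have : |a| * t ^ q ≤ ε * t := calc
      |a| * t ^ q ≤ (t ^ (1 - q) * ε) * t ^ q := by gcongr; exact (div_le_iff₀ hε).1 hlarge
      _ = ε * (t ^ (1 - q) * t ^ q) := by ring
      _ = ε * t := by rw [← Real.rpow_add ht0, sub_add_cancel, Real.rpow_one]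
    have : 0 ≤ |a| * T ^ q := by positivity
    linarith

theorem abs_eval_le_sum_abs_coeff_mul_pow {σ : Type*} (p : MvPolynomial σ ℝ) {x : σ → ℝ} {r : ℝ}
    (hr : 1 ≤ r) (hx : ∀ i, |x i| ≤ r) :
    |MvPolynomial.eval x p| ≤ (∑ s ∈ p.support, |p.coeff s|) * r ^ p.totalDegree := by
  rw [MvPolynomial.eval_eq, Finset.sum_mul]
  refine (Finset.abs_sum_le_sum_abs _ _).trans (Finset.sum_le_sum fun s hs => ?_)
  rw [abs_mul, Finset.abs_prod]
  gcongr
  calc ∏ i ∈ s.support, |x i ^ s i| ≤ ∏ i ∈ s.support, r ^ s i := by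
        gcongr with i
        rw [abs_pow]
        gcongr
        exact hx i
    _ = r ^ ∑ i ∈ s.support, s i := Finset.prod_pow_eq_pow_sum _ _ _
    _ ≤ r ^ p.totalDegree := pow_le_pow_right₀ hr (MvPolynomial.le_totalDegree hs)

section QuadraticWeight

variable {ι : Type*} [Fintype ι]

theorem abs_le_sqrt_one_add_dotProduct_self (x : ι → ℝ) (i : ι) : |x i| ≤ √(1 + x ⬝ᵥ x) := by
  refine Real.abs_le_sqrt ?_
  have : x i * x i ≤ x ⬝ᵥ x :=
    Finset.single_le_sum (fun j _ => mul_self_nonneg (x j)) (Finset.mem_univ i)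
  linarith

theorem exists_forall_mul_abs_eval_rpow_le (p : MvPolynomial ι ℝ) {θ : ℝ} (hθ0 : 0 ≤ θ)
    (hθ : p.totalDegree * θ < 2) {a ε : ℝ} (ha : 0 ≤ a) (hε : 0 < ε) :
    ∃ C : ℝ, ∀ x : ι → ℝ, a * |MvPolynomial.eval x p| ^ θ ≤ ε * (x ⬝ᵥ x) + C := by
  set d := p.totalDegree
  set A := ∑ s ∈ p.support, |p.coeff s|
  obtain ⟨C, hC⟩ := exists_forall_mul_rpow_le_mul_add (q := d * θ / 2) (by positivity)
    (by linarith) (a * A ^ θ) hε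
  refine ⟨ε + C, fun x => ?_⟩
  have hx0 : 0 ≤ x ⬝ᵥ x := Finset.sum_nonneg fun i _ => mul_self_nonneg (x i)
  have hr : 1 ≤ √(1 + x ⬝ᵥ x) := Real.one_le_sqrt.2 (by linarith)
  calc a * |MvPolynomial.eval x p| ^ θ ≤ a * (A * √(1 + x ⬝ᵥ x) ^ d) ^ θ := by
        gcongr
        exact abs_eval_le_sum_abs_coeff_mul_pow p hr (abs_le_sqrt_one_add_dotProduct_self x)
    _ = a * A ^ θ * (1 + x ⬝ᵥ x) ^ (d * θ / 2) := by
        rw [Real.mul_rpow (by positivity) (by positivity), ← Real.rpow_natCast, Real.sqrt_eq_rpow,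
          ← Real.rpow_mul (by positivity), ← Real.rpow_mul (by positivity), mul_assoc]
        ring_nf
    _ ≤ ε * (1 + x ⬝ᵥ x) + C := hC _ (by positivity)
    _ = ε * (x ⬝ᵥ x) + (ε + C) := by ring

open scoped MatrixOrder in
theorem exists_pos_forall_mul_dotProduct_self_le {K : Matrix ι ι ℝ} (hK : K.PosDef) :
    ∃ c : ℝ, 0 < c ∧ ∀ x : ι → ℝ, c * (x ⬝ᵥ x) ≤ x ⬝ᵥ K *ᵥ x := by
  classical
  cases isEmpty_or_nonempty ι
  · exact ⟨1, one_pos, fun x => by simp [dotProduct]⟩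
  obtain ⟨c, hc, hcK⟩ := (CFC.exists_pos_algebraMap_le_iff (a := K) hK.isHermitian).2
    fun _ => hK.isStrictlyPositive.spectrum_pos
  refine ⟨c, hc, fun x => ?_⟩
  have := (Matrix.le_iff.1 hcK).dotProduct_mulVec_nonneg x
  simpa [sub_mulVec, Algebra.algebraMap_eq_smul_one, smul_mulVec] using this

theorem integrable_exp_neg_mul_dotProduct_self {c : ℝ} (hc : 0 < c) :
    Integrable fun x : ι → ℝ => Real.exp (-(c * (x ⬝ᵥ x))) := by
  refine (Integrable.fintype_prod fun _ : ι => integrable_exp_neg_mul_sq hc).congr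
    (ae_of_all _ fun x => ?_)
  simp only [dotProduct, ← Real.exp_sum, Finset.mul_sum, ← Finset.sum_neg_distrib, neg_mul, sq]

theorem integrable_exp_mul_abs_eval_rpow_mul_exp_neg {K : Matrix ι ι ℝ} (hK : K.PosDef)
    (p : MvPolynomial ι ℝ) {θ : ℝ} (hθ0 : 0 ≤ θ) (hθ : p.totalDegree * θ < 2) {a : ℝ}
    (ha : 0 ≤ a) :
    Integrable fun x : ι → ℝ =>
      Real.exp (a * |MvPolynomial.eval x p| ^ θ) * Real.exp (-(x ⬝ᵥ K *ᵥ x)) := by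
  obtain ⟨c, hc, hcK⟩ := exists_pos_forall_mul_dotProduct_self_le hK
  obtain ⟨C, hC⟩ := exists_forall_mul_abs_eval_rpow_le p hθ0 hθ ha (half_pos hc)
  refine ((integrable_exp_neg_mul_dotProduct_self (half_pos hc)).const_mul (Real.exp C)).mono'
    ?_ (ae_of_all _ fun x => ?_)
  · have := MvPolynomial.continuous_eval p
    refine Continuous.aestronglyMeasurable ?_
    fun_prop (disch := exact hθ0)
  · rw [← Real.exp_add, ← Real.exp_add, Real.norm_of_nonneg (Real.exp_pos _).le, Real.exp_le_exp]
    linarith [hC x, hcK x]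

end QuadraticWeight

theorem integrable_exp_neg_pow_two_mul {m : ℕ} (hm : m ≠ 0) :
    Integrable fun r : ℝ => Real.exp (-(r ^ (2 * m))) := by
  have hm0 : (0 : ℝ) < m := by positivity
  refine ((integrable_exp_neg_mul_sq hm0).const_mul (Real.exp (m - 1))).mono'
    (by fun_prop) (ae_of_all _ fun r => ?_)
  have bernoulli : 1 + m * (r ^ 2 - 1) ≤ (r ^ 2) ^ m :=
    one_add_mul_sub_le_pow (by linarith [sq_nonneg r]) m
  rw [← Real.exp_add, Real.norm_of_nonneg (Real.exp_pos _).le, Real.exp_le_exp, pow_mul]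
  linarith

theorem continuous_phiFT {m : ℕ} (hm : m ≠ 0) : Continuous (phiFT m) := by
  refine continuous_const.mul (continuous_of_dominated
    (fun ρ => Continuous.aestronglyMeasurable (by fun_prop))
    (fun ρ => ae_of_all _ fun r => ?_) (integrable_exp_neg_pow_two_mul hm)
    (ae_of_all _ fun r => by fun_prop))
  rw [norm_mul, Complex.norm_exp, Complex.norm_real, Real.norm_of_nonneg (Real.exp_pos _).le]
  simp

theorem coeffA_eq_integral (m : ℕ) (R : ℝ) (n : ℕ) :
    coeffA m R n = ∫ ρ in (-R)..R, phiFT m ρ * (Complex.I * ρ) ^ n := by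
  simp only [coeffA, mul_pow, mul_left_comm _ (Complex.I ^ n),
    intervalIntegral.integral_const_mul]

theorem hasSum_intervalIntegral_mul_integral_cexp_abs_eval_rpow {ι : Type*} [Fintype ι]
    {K : Matrix ι ι ℝ} (hK : K.PosDef) (p : MvPolynomial ι ℝ) {θ : ℝ} (hθ0 : 0 ≤ θ)
    (hθ : p.totalDegree * θ < 2) {φ : ℝ → ℂ} {a b : ℝ} (hφ : IntervalIntegrable φ volume a b) :
    HasSum (fun n : ℕ => (∫ ρ in a..b, φ ρ * (Complex.I * ρ) ^ n) / (n.factorial : ℂ) *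
        ((∫ x, |MvPolynomial.eval x p| ^ (n * θ) * Real.exp (-(x ⬝ᵥ K *ᵥ x)) : ℝ) : ℂ))
      (∫ ρ in a..b, φ ρ * ∫ x : ι → ℝ, Complex.exp (-((x ⬝ᵥ K *ᵥ x : ℝ) : ℂ)) *
        Complex.exp (Complex.I * ρ * ((|MvPolynomial.eval x p| ^ θ : ℝ) : ℂ))) := by
  have hp := MvPolynomial.continuous_eval p
  have hg : Continuous fun x : ι → ℝ => ((|MvPolynomial.eval x p| ^ θ : ℝ) : ℂ) := by
    fun_prop (disch := exact hθ0)
  have hw : Continuous fun x : ι → ℝ => Complex.exp (-((x ⬝ᵥ K *ᵥ x : ℝ) : ℂ)) := by fun_prop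
  refine (hasSum_intervalIntegral_mul_integral_mul_cexp hφ (μ := volume) hw.aestronglyMeasurable
    hg.aestronglyMeasurable ?_).congr_fun fun n => ?_
  · refine (integrable_exp_mul_abs_eval_rpow_mul_exp_neg hK p hθ0 hθ
      (a := max |a| |b|) (by positivity)).congr (ae_of_all _ fun x => ?_)
    simp only [Complex.norm_real, Complex.norm_exp, Complex.neg_re, Complex.ofReal_re,
      Real.norm_of_nonneg (Real.rpow_nonneg (abs_nonneg (MvPolynomial.eval x p)) θ)]
  · rw [← integral_complex_ofReal]
    simp only [mul_comm (n : ℝ), Real.rpow_mul_natCast (abs_nonneg _), Complex.ofReal_mul,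
      Complex.ofReal_pow, Complex.ofReal_exp, Complex.ofReal_neg]

theorem stmt8_general {ι : Type*} [Fintype ι] {m : ℕ} (p : MvPolynomial ι ℝ)
    (hdeg : p.totalDegree < 4 * m) {M : ℝ} (hPbound : ∀ x : ι → ℝ, -M ≤ MvPolynomial.eval x p)
    {K : Matrix ι ι ℝ} (hK : K.PosDef) (R : ℝ) {J : ℂ}
    (hJ : J = (Real.exp M : ℂ) *
      ∫ ρ in (-R)..R, phiFT m ρ *
        ∫ x : ι → ℝ, Complex.exp (-((x ⬝ᵥ K *ᵥ x : ℝ) : ℂ)) *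
          Complex.exp (Complex.I * (ρ : ℂ) *
            (((MvPolynomial.eval x p + M) ^ ((1 : ℝ) / (2 * m)) : ℝ) : ℂ))) :
    HasSum (fun n : ℕ => (Real.exp M : ℂ) * (coeffA m R n / (n.factorial : ℂ)) *
        ((∫ x : ι → ℝ,
          (MvPolynomial.eval x p + M) ^ ((n : ℝ) / (2 * m)) *
            Real.exp (-(x ⬝ᵥ K *ᵥ x)) : ℝ) : ℂ)) J ∧
      Summable (fun n : ℕ => ‖(Real.exp M : ℂ) * (coeffA m R n / (n.factorial : ℂ)) *
        ((∫ x : ι → ℝ,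
          (MvPolynomial.eval x p + M) ^ ((n : ℝ) / (2 * m)) *
            Real.exp (-(x ⬝ᵥ K *ᵥ x)) : ℝ) : ℂ)‖) := by
  have hm : m ≠ 0 := by omega
  have hm' : (0 : ℝ) < 2 * m := by positivity
  set q := p + MvPolynomial.C M
  have hq : ∀ x, |MvPolynomial.eval x q| = MvPolynomial.eval x p + M := fun x => by
    rw [map_add, MvPolynomial.eval_C, abs_of_nonneg (by linarith [hPbound x])]
  have hqdeg : q.totalDegree * ((1 : ℝ) / (2 * m)) < 2 := by
    have hlt : q.totalDegree < 4 * m := (MvPolynomial.totalDegree_add _ _).trans_lt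
      (max_lt hdeg (by rw [MvPolynomial.totalDegree_C]; omega))
    rw [mul_one_div, div_lt_iff₀ hm']
    calc (q.totalDegree : ℝ) < (4 * m : ℕ) := by exact_mod_cast hlt
      _ = 2 * (2 * m) := by push_cast; ring
  have hseries := (hasSum_intervalIntegral_mul_integral_cexp_abs_eval_rpow hK q (by positivity)
    hqdeg ((continuous_phiFT hm).intervalIntegrable (-R) R)).mul_left (Real.exp M : ℂ)
  simp only [hq, ← hJ, mul_one_div, ← coeffA_eq_integral, ← mul_assoc] at hseries
  exact ⟨hseries, hseries.summable.norm⟩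

theorem stmt8 (N m : ℕ) (hN : 0 < N) (hm : 0 < m)
    (p : MvPolynomial (Fin N) ℝ) (hdeg : p.totalDegree = 2 * m)
    (M : ℝ) (hM : 0 ≤ M) (hPbound : ∀ x : Fin N → ℝ, -M ≤ MvPolynomial.eval x p)
    (K : Matrix (Fin N) (Fin N) ℝ) (hK : K.PosDef) (R : ℝ) (hR : 0 < R)
    (J : ℂ)
    (hJ : J = (Real.exp M : ℂ) *
      ∫ ρ in (-R)..R, phiFT m ρ *
        ∫ x : Fin N → ℝ, Complex.exp (-((x ⬝ᵥ K *ᵥ x : ℝ) : ℂ)) *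
          Complex.exp (Complex.I * (ρ : ℂ) *
            (((MvPolynomial.eval x p + M) ^ ((1 : ℝ) / (2 * m)) : ℝ) : ℂ))) :
    HasSum (fun n : ℕ => (Real.exp M : ℂ) * (coeffA m R n / (n.factorial : ℂ)) *
        ((∫ x : Fin N → ℝ,
          (MvPolynomial.eval x p + M) ^ ((n : ℝ) / (2 * m)) *
            Real.exp (-(x ⬝ᵥ K *ᵥ x)) : ℝ) : ℂ)) J ∧
      Summable (fun n : ℕ => ‖(Real.exp M : ℂ) * (coeffA m R n / (n.factorial : ℂ)) *
        ((∫ x : Fin N → ℝ,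
          (MvPolynomial.eval x p + M) ^ ((n : ℝ) / (2 * m)) *
            Real.exp (-(x ⬝ᵥ K *ᵥ x)) : ℝ) : ℂ)‖) :=
  stmt8_general p (by omega) hPbound hK R hJ
end

section
/- For every positive integer m, every R > 0 and every nonnegative integer n, the coefficient A_n(m, R) := i^n ∫_{-R}^{R} φ_m(ρ) ρ^n dρ satisfies A_n(m, R) = (1/π) ∫_ℝ ( d^n/dr^n e^{-r^{2m}} ) · (sin(Rr)/r) dr; in particular A_n(m, R) is real. -/
open MeasureTheory

/-!
Since `(iρ)ⁿ φ_m(ρ)` is the Fourier transform of `dⁿ/drⁿ e^{-r^{2m}}`, the coefficient `A_n` is the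
integral of that transform over `[-R, R]`. By Fubini this pairs the derivative with the
transform of the indicator of `[-R, R]`, which is the real kernel `2 sin(Rr)/r`. Every
derivative of `e^{-r^{2m}}` is a polynomial times `e^{-r^{2m}}`, and Bernoulli's inequality
`1 + m(r² - 1) ≤ r^{2m}` dominates the latter by a Gaussian, so all of them are integrable.
-/

open scoped FourierTransform Polynomial Real

lemma iteratedDeriv_continuousLinearMap_comp {𝕜 E F : Type*} [NontriviallyNormedField 𝕜]
    [NormedAddCommGroup E] [NormedSpace 𝕜 E] [NormedAddCommGroup F] [NormedSpace 𝕜 F]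
    (L : E →L[𝕜] F) {f : 𝕜 → E} {n : ℕ} {x : 𝕜} (hf : ContDiffAt 𝕜 n f x) :
    iteratedDeriv n (L ∘ f) x = L (iteratedDeriv n f x) := by
  simp only [iteratedDeriv, L.iteratedFDeriv_comp_left hf le_rfl, Function.comp_apply,
    ContinuousLinearMap.compContinuousMultilinearMap_coe]

section AngularFourier

variable {E : Type*} [NormedAddCommGroup E] [NormedSpace ℂ E]

/-- The Fourier transform `ρ ↦ (1/2π) ∫ e^{-iρr} f(r) dr` in angular frequency; the normalisation
makes `phiFT m` the transform of `r ↦ e^{-r^{2m}}`. -/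
noncomputable def angularFourier (f : ℝ → E) (ρ : ℝ) : E :=
  (1 / (2 * π) : ℂ) • ∫ r : ℝ, Complex.exp (-(Complex.I * ρ * r)) • f r

lemma angularFourier_eq_fourier (f : ℝ → E) (ρ : ℝ) :
    angularFourier f ρ = (1 / (2 * π) : ℂ) • 𝓕 f (ρ / (2 * π)) := by
  rw [angularFourier, Real.fourier_real_eq_integral_exp_smul]
  congr! 5 with r
  push_cast
  field_simp

lemma angularFourier_iteratedDeriv {f : ℝ → E} {n : ℕ} (hf : ContDiff ℝ n f)
    (hint : ∀ k ≤ n, Integrable (iteratedDeriv k f)) (ρ : ℝ) :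
    angularFourier (iteratedDeriv n f) ρ = (Complex.I * ρ) ^ n • angularFourier f ρ := by
  have hfourier := Real.fourier_iteratedDeriv (N := n) (mod_cast hf)
    (fun k hk ↦ hint k (mod_cast hk)) le_rfl
  have hfreq : (2 * π * Complex.I * (ρ / (2 * π) : ℝ) : ℂ) = Complex.I * ρ := by
    push_cast
    field_simp
  simp only [angularFourier_eq_fourier, hfourier, hfreq]
  exact smul_comm _ _ _

lemma intervalIntegral_exp_neg_I_mul (R r : ℝ) :
    ∫ ρ in (-R)..R, Complex.exp (-(Complex.I * ρ * r)) = 2 * (R * Real.sinc (R * r) : ℝ) := by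
  rcases eq_or_ne r 0 with rfl | hr
  · simp only [Complex.ofReal_zero, mul_zero, neg_zero, Complex.exp_zero,
      intervalIntegral.integral_const, sub_neg_eq_add, Complex.real_smul, Real.sinc_zero]
    push_cast
    ring
  · have hphase (ρ : ℝ) : -(Complex.I * ρ * r) = (ρ * -r : ℝ) * Complex.I := by
      push_cast
      ring
    simp_rw [hphase]
    rw [intervalIntegral.integral_comp_mul_right (fun t : ℝ ↦ Complex.exp (t * Complex.I))
      (neg_ne_zero.mpr hr), neg_mul R, integral_exp_mul_I_eq_sinc, mul_neg, Real.sinc_neg,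
      Complex.real_smul]
    have hr' : (r : ℂ) ≠ 0 := mod_cast hr
    push_cast
    field_simp

lemma norm_exp_neg_I_mul (ρ r : ℝ) : ‖Complex.exp (-(Complex.I * ρ * r))‖ = 1 := by
  simp [Complex.norm_exp]

lemma integrable_uncurry_exp_neg_I_mul_smul (μ ν : Measure ℝ) [IsFiniteMeasure μ]
    [SFinite ν] {f : ℝ → E} (hf : Integrable f ν) :
    Integrable (Function.uncurry fun ρ r : ℝ ↦ Complex.exp (-(Complex.I * ρ * r)) • f r)
      (μ.prod ν) := by
  have hsnd := hf.comp_snd μ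
  refine hsnd.norm.mono' (.smul (by fun_prop) hsnd.aestronglyMeasurable) (.of_forall fun z ↦ ?_)
  simp only [Function.uncurry_def, norm_smul, norm_exp_neg_I_mul, one_mul, le_refl]

lemma intervalIntegral_angularFourier [CompleteSpace E] {f : ℝ → E} (hf : Integrable f)
    (R : ℝ) :
    ∫ ρ in (-R)..R, angularFourier f ρ =
      (1 / π : ℂ) • ∫ r : ℝ, ((R * Real.sinc (R * r) : ℝ) : ℂ) • f r := by
  have : IsFiniteMeasure (volume.restrict (Set.uIoc (-R) R)) :=
    isFiniteMeasure_restrict.mpr (by simp [Set.uIoc])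
  simp only [angularFourier]
  rw [intervalIntegral.integral_smul,
    intervalIntegral_integral_swap (integrable_uncurry_exp_neg_I_mul_smul _ _ hf)]
  simp_rw [intervalIntegral.integral_smul_const, intervalIntegral_exp_neg_I_mul, mul_smul,
    integral_smul, smul_smul]
  congr 1
  field_simp

lemma I_pow_smul_intervalIntegral_pow_smul_angularFourier [CompleteSpace E] {f : ℝ → E} {n : ℕ}
    (hf : ContDiff ℝ n f) (hint : ∀ k ≤ n, Integrable (iteratedDeriv k f)) (R : ℝ) :
    Complex.I ^ n • ∫ ρ in (-R)..R, (ρ : ℂ) ^ n • angularFourier f ρ =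
      (1 / π : ℂ) • ∫ r : ℝ, ((R * Real.sinc (R * r) : ℝ) : ℂ) • iteratedDeriv n f r := by
  rw [← intervalIntegral_angularFourier (hint n le_rfl), ← intervalIntegral.integral_smul]
  simp_rw [smul_smul, ← mul_pow, angularFourier_iteratedDeriv hf hint]

end AngularFourier

lemma exists_iteratedDeriv_exp_eval_eq (p : ℝ[X]) (n : ℕ) :
    ∃ q : ℝ[X], iteratedDeriv n (fun x ↦ Real.exp (p.eval x)) =
      fun x ↦ q.eval x * Real.exp (p.eval x) := by
  induction n with
  | zero => exact ⟨1, by simp⟩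
  | succ n ih =>
    obtain ⟨q, hq⟩ := ih
    refine ⟨q.derivative + q * p.derivative, ?_⟩
    ext x
    rw [iteratedDeriv_succ, hq, ((q.hasDerivAt x).fun_mul (p.hasDerivAt x).exp).deriv,
      Polynomial.eval_add, Polynomial.eval_mul]
    ring

lemma exp_neg_pow_two_mul_le (m : ℕ) (r : ℝ) :
    Real.exp (-(r ^ (2 * m))) ≤ Real.exp (m - 1) * Real.exp (-m * r ^ 2) := by
  have hbernoulli := one_add_mul_le_pow (a := r ^ 2 - 1) (by linarith [sq_nonneg r]) m
  rw [add_sub_cancel, ← pow_mul] at hbernoulli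
  rw [← Real.exp_add]
  gcongr
  linarith

lemma integrable_pow_mul_exp_neg_pow {m : ℕ} (hm : 0 < m) (k : ℕ) :
    Integrable fun r : ℝ ↦ r ^ k * Real.exp (-(r ^ (2 * m))) := by
  have hgauss : Integrable fun r : ℝ ↦ r ^ k * Real.exp (-m * r ^ 2) := by
    simpa only [Real.rpow_natCast] using integrable_rpow_mul_exp_neg_mul_sq (b := m)
      (mod_cast hm) (s := k) (by linarith [k.cast_nonneg (α := ℝ)])
  refine (hgauss.norm.const_mul (Real.exp (m - 1))).mono' (by fun_prop) (.of_forall fun r ↦ ?_)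
  rw [norm_mul, norm_mul, mul_left_comm, Real.norm_of_nonneg (Real.exp_nonneg _),
    Real.norm_of_nonneg (Real.exp_nonneg _)]
  gcongr
  exact exp_neg_pow_two_mul_le m r

lemma integrable_eval_mul_exp_neg_pow {m : ℕ} (hm : 0 < m) (p : ℝ[X]) :
    Integrable fun r : ℝ ↦ p.eval r * Real.exp (-(r ^ (2 * m))) := by
  simp only [Polynomial.eval_eq_sum_range, Finset.sum_mul, mul_assoc]
  exact integrable_finsetSum _ fun i _ ↦ (integrable_pow_mul_exp_neg_pow hm i).const_mul _

lemma integrable_iteratedDeriv_exp_neg_pow {m : ℕ} (hm : 0 < m) (n : ℕ) :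
    Integrable (iteratedDeriv n fun r : ℝ ↦ Real.exp (-(r ^ (2 * m)))) := by
  obtain ⟨q, hq⟩ := exists_iteratedDeriv_exp_eval_eq (-Polynomial.X ^ (2 * m)) n
  simp only [Polynomial.eval_neg, Polynomial.eval_pow, Polynomial.eval_X] at hq
  rw [hq]
  exact integrable_eval_mul_exp_neg_pow hm q

lemma mul_sinc_mul (R r : ℝ) :
    R * Real.sinc (R * r) = if r = 0 then R else Real.sin (R * r) / r := by
  rcases eq_or_ne R 0 with rfl | hR
  · simp
  · by_cases hr : r = 0
    · simp [hr]
    · rw [if_neg hr, Real.sinc_of_ne_zero (mul_ne_zero hR hr)]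
      field_simp

theorem stmt10_general {f : ℝ → ℝ} {n : ℕ} (hf : ContDiff ℝ n f)
    (hint : ∀ k ≤ n, Integrable (iteratedDeriv k f)) (R : ℝ) :
    Complex.I ^ n * ∫ ρ in (-R)..R, angularFourier (fun r ↦ (f r : ℂ)) ρ * (ρ : ℂ) ^ n =
      (((1 / π) * ∫ r : ℝ, iteratedDeriv n f r * (R * Real.sinc (R * r)) : ℝ) : ℂ) := by
  have hderiv (k : ℕ) (hk : k ≤ n) :
      iteratedDeriv k (fun r ↦ (f r : ℂ)) = fun r ↦ ((iteratedDeriv k f r : ℝ) : ℂ) :=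
    funext fun _ ↦ iteratedDeriv_continuousLinearMap_comp Complex.ofRealCLM
      (hf.of_le (mod_cast hk)).contDiffAt
  have hmain := I_pow_smul_intervalIntegral_pow_smul_angularFourier
    (Complex.ofRealCLM.contDiff.comp hf)
    (fun k hk ↦ (hderiv k hk).symm ▸ (hint k hk).ofReal) R
  simp only [Function.comp_def, Complex.ofRealCLM_apply, hderiv n le_rfl, smul_eq_mul] at hmain
  rw [Complex.ofReal_mul, ← integral_complex_ofReal]
  push_cast at hmain ⊢
  simpa only [mul_comm] using hmain

theorem stmt10 (m : ℕ) (hm : 0 < m) (R : ℝ) (hR : 0 < R) (n : ℕ) :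
    coeffA m R n =
      (((1 / Real.pi) *
        ∫ r : ℝ, iteratedDeriv n (fun s : ℝ => Real.exp (-(s ^ (2 * m)))) r *
          (if r = 0 then R else Real.sin (R * r) / r) : ℝ) : ℂ) := by
  simp_rw [← mul_sinc_mul]
  exact stmt10_general (by fun_prop) (fun k _ ↦ integrable_iteratedDeriv_exp_neg_pow hm k) R
end
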